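/- Let U_1,…,U_n be real random variables on a common probability space with dependency neighborhoods D_1,…,D_n, with E[U_i] = 0 and E[U_i⁴] < ∞ for each i, and set W = Σ_{i=1}^n U_i with Var(W) = 1. Let Z be a standard normal random variable. Then for every 1-Lipschitz function f : ℝ → ℝ, |E[f(W)] − E[f(Z)]| ≤ Σ_{i=1}^n Σ_{j∈D_i} Σ_{k∈D_i} E|U_i U_j U_k| + √(2/π) · √(Var(Σ_{i=1}^n Σ_{j∈D_i} U_i U_j)). -/

import Mathlib

open MeasureTheory ProbabilityTheory Filter

/-- `D` is a family of dependency neighborhoods for the random variables `U` if `i ∈ D i`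
and, for each `i`, `U i` is independent of the family `{U j : j ∉ D i}`. -/
def DependencyNeighborhoods {Ω : Type*} [MeasurableSpace Ω] (μ : Measure Ω)
    {n : ℕ} (U : Fin n → Ω → ℝ) (D : Fin n → Finset (Fin n)) : Prop :=
  (∀ i, i ∈ D i) ∧
  ∀ i, IndepFun (U i) (fun ω (j : {j : Fin n // j ∉ D i}) => U j.1 ω) μ

noncomputable section

namespace SteinAux

open Topology

/-- standard normal density -/
def ph (x : ℝ) : ℝ := (Real.sqrt (2 * Real.pi))⁻¹ * Real.exp (-(x ^ 2) / 2)

/-- tail integral -/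
def tl (k : ℝ → ℝ) (x : ℝ) : ℝ := ∫ t in Set.Ioi x, k t

/-- Gaussian tail -/
def Ps (x : ℝ) : ℝ := tl ph x

lemma ph_eq (x : ℝ) : gaussianPDFReal 0 1 x = ph x := by
  simp [gaussianPDFReal, ph]

lemma ph_pos (x : ℝ) : 0 < ph x := by
  unfold ph
  have := Real.pi_pos
  positivity

lemma ph_neg (x : ℝ) : ph (-x) = ph x := by simp [ph]

lemma ph_deriv (x : ℝ) : HasDerivAt ph (-x * ph x) x := by
  have h1 : HasDerivAt (fun x : ℝ => -(x ^ 2) / 2) (-x) x := by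
    have := ((hasDerivAt_id x).pow 2).neg.div_const 2
    refine this.congr_deriv ?_
    simp; ring
  have := h1.exp.const_mul (Real.sqrt (2 * Real.pi))⁻¹
  refine this.congr_deriv ?_
  unfold ph; ring

lemma ph_cont : Continuous ph := 
  continuous_iff_continuousAt.2 fun x => (ph_deriv x).continuousAt

lemma ph_int : Integrable ph := by
  have := integrable_gaussianPDFReal 0 1
  exact this.congr (by filter_upwards with x using ph_eq x)

lemma ph_int_one : ∫ x, ph x = 1 := by
  rw [← integral_gaussianPDFReal_eq_one 0 (v := 1) one_ne_zero]
  exact integral_congr_ae (by filter_upwards with x using (ph_eq x).symm)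

lemma ph_le (x : ℝ) : ph x ≤ 2 / (2 + x ^ 2) := by
  have h1 : (Real.sqrt (2 * Real.pi))⁻¹ ≤ 1 := by
    apply inv_le_one_of_one_le₀
    rw [Real.one_le_sqrt]
    nlinarith [Real.pi_gt_three]
  have h2 : Real.exp (-(x ^ 2) / 2) ≤ 2 / (2 + x ^ 2) := by
    have : -(x^2)/2 = -(x^2/2) := by ring
    rw [this, Real.exp_neg, inv_le_comm₀ (Real.exp_pos _) (by positivity), inv_div]
    have := Real.add_one_le_exp (x^2/2)
    linarith
  unfold ph
  calc _ ≤ 1 * Real.exp (-(x ^ 2) / 2) := by gcongr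
    _ ≤ _ := by linarith

lemma xph_le {x : ℝ} (hx : 0 < x) : x * ph x ≤ 2 / x := by
  have := ph_le x
  calc x * ph x ≤ x * (2 / (2 + x ^ 2)) := by gcongr
    _ ≤ 2 / x := by
      rw [mul_div_assoc', div_le_div_iff₀ (by positivity) hx]
      nlinarith

lemma tend_two_div : Tendsto (fun x : ℝ => 2 / x) atTop (𝓝 0) :=
  tendsto_const_nhds.div_atTop tendsto_id

lemma xph_tend : Tendsto (fun x => x * ph x) atTop (𝓝 0) := by
  refine squeeze_zero' ?_ ?_ tend_two_div
  · filter_upwards [eventually_gt_atTop 0] with x hx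
    exact mul_nonneg hx.le (ph_pos x).le
  · filter_upwards [eventually_gt_atTop 0] with x hx using xph_le hx

lemma ph_tend : Tendsto ph atTop (𝓝 0) := by
  refine squeeze_zero' ?_ ?_ xph_tend
  · filter_upwards with x using (ph_pos x).le
  · filter_upwards [eventually_ge_atTop 1] with x hx
    nlinarith [ph_pos x]

lemma tl_eq {k : ℝ → ℝ} (hi : ∀ x, IntegrableOn k (Set.Ioi x)) (x : ℝ) :
    tl k x = tl k 0 - ∫ t in (0 : ℝ)..x, k t := by
  have := intervalIntegral.integral_interval_add_Ioi (hi 0) (hi x)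
  unfold tl; linarith

lemma tl_deriv {k : ℝ → ℝ} (hc : Continuous k) (hi : ∀ x, IntegrableOn k (Set.Ioi x)) (x : ℝ) :
    HasDerivAt (tl k) (-k x) x := by
  have h : tl k = fun x => tl k 0 - ∫ t in (0 : ℝ)..x, k t := funext (tl_eq hi)
  rw [h]
  exact (intervalIntegral.integral_hasDerivAt_right (hc.intervalIntegrable _ _)
    (hc.stronglyMeasurableAtFilter _ _) hc.continuousAt).const_sub _

lemma tl_tend {k : ℝ → ℝ} (hi : ∀ x, IntegrableOn k (Set.Ioi x)) :
    Tendsto (tl k) atTop (𝓝 0) := by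
  have h : tl k = fun x => tl k 0 - ∫ t in (0 : ℝ)..x, k t := funext (tl_eq hi)
  rw [h]
  have := (intervalIntegral_tendsto_integral_Ioi 0 (hi 0) tendsto_id).const_sub (tl k 0)
  simpa [tl] using this

lemma Ps_deriv (x : ℝ) : HasDerivAt Ps (-ph x) x :=
  tl_deriv ph_cont (fun _ => ph_int.integrableOn) x

lemma Ps_cont : Continuous Ps :=
  continuous_iff_continuousAt.2 fun x => (Ps_deriv x).continuousAt

lemma Ps_tend : Tendsto Ps atTop (𝓝 0) := tl_tend (fun _ => ph_int.integrableOn)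

lemma Ps_nonneg (x : ℝ) : 0 ≤ Ps x :=
  setIntegral_nonneg measurableSet_Ioi fun t _ => (ph_pos t).le

lemma Ps_neg (x : ℝ) : Ps (-x) = 1 - Ps x := by
  have h1 : Ps (-x) = ∫ t in Set.Iic x, ph t := by
    have := integral_comp_neg_Ioi (-x) ph
    simp only [ph_neg, neg_neg] at this
    exact this
  have h2 := integral_add_compl (s := Set.Iic x) measurableSet_Iic ph_int
  rw [ph_int_one, Set.compl_Iic] at h2
  rw [h1]; unfold Ps tl; linarith

lemma Ps_zero : Ps 0 = 1 / 2 := by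
  have := Ps_neg 0
  simp at this; linarith

lemma mills_upper (x : ℝ) : 0 ≤ ph x - x * Ps x := by
  rcases le_or_gt x 0 with hx | hx
  · nlinarith [ph_pos x, Ps_nonneg x]
  have hd : ∀ t ∈ Set.Ici x, HasDerivAt ph (-t * ph t) t := fun t _ => ph_deriv t
  have hs : ∀ t ∈ Set.Ioi x, -t * ph t ≤ 0 := fun t ht => by
    have : 0 < t := hx.trans ht
    nlinarith [mul_pos this (ph_pos t)]
  have h1 := integral_Ioi_of_hasDerivAt_of_nonpos' hd hs ph_tend
  have h2 := integrableOn_Ioi_deriv_of_nonpos' hd hs ph_tend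
  have h3 : ∫ t in Set.Ioi x, -t * ph t ≤ ∫ t in Set.Ioi x, -x * ph t := by
    apply setIntegral_mono_on h2 (ph_int.integrableOn.const_mul _) measurableSet_Ioi
    intro t ht
    have : x < t := ht
    nlinarith [ph_pos t]
  rw [h1, integral_const_mul] at h3
  unfold Ps tl
  linarith

lemma mills_lower (x : ℝ) : 0 ≤ (1 + x ^ 2) * Ps x - x * ph x := by
  have hp : ∀ x : ℝ, 0 < 1 + x ^ 2 := fun x => by positivity
  have hd : ∀ x, HasDerivAt (fun x => Ps x - x * ph x / (1 + x ^ 2))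
      (-(2 * ph x / (1 + x ^ 2) ^ 2)) x := by
    intro x
    have h1 : HasDerivAt (fun x : ℝ => 1 + x ^ 2) (2 * x) x := by
      simpa using ((hasDerivAt_id x).pow 2).const_add 1
    have := (Ps_deriv x).sub ((((hasDerivAt_id x).mul (ph_deriv x))).div h1 (hp x).ne')
    refine this.congr_deriv ?_
    have := (hp x).ne'
    simp only [id, Pi.mul_apply]
    field_simp
    ring
  have ha : Antitone (fun x => Ps x - x * ph x / (1 + x ^ 2)) := by
    apply antitone_of_deriv_nonpos (fun x => (hd x).differentiableAt)
    intro x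
    rw [(hd x).deriv]
    have := ph_pos x
    have := hp x
    exact neg_nonpos.2 (by positivity)
  have ht : Tendsto (fun x => Ps x - x * ph x / (1 + x ^ 2)) atTop (𝓝 0) := by
    have : Tendsto (fun x => x * ph x / (1 + x ^ 2)) atTop (𝓝 0) := by
      refine squeeze_zero' ?_ ?_ xph_tend
      · filter_upwards [eventually_gt_atTop 0] with x hx
        have := ph_pos x
        positivity
      · filter_upwards [eventually_gt_atTop 0] with x hx
        have := ph_pos x
        apply div_le_self (by positivity)
        nlinarith
    simpa using Ps_tend.sub this
  have h := ha.le_of_tendsto ht x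
  have h2 : x * ph x / (1 + x ^ 2) ≤ Ps x := by simpa using h
  rw [div_le_iff₀ (hp x)] at h2
  linarith

/-- Mills ratio -/
def mi (x : ℝ) : ℝ := Ps x / ph x

lemma mi_deriv (x : ℝ) : HasDerivAt mi (x * mi x - 1) x := by
  have := (Ps_deriv x).div (ph_deriv x) (ph_pos x).ne'
  refine this.congr_deriv ?_
  have := (ph_pos x).ne'
  unfold mi
  field_simp
  ring

def GG (x : ℝ) : ℝ := ph x * (1 - x * mi x) ^ 2 + x * (1 - x * mi x)

def yy (x : ℝ) : ℝ := x * ph x * (1 - x * mi x) ^ 2 - 2 * ph x * (1 - x * mi x) * mi x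
  + (1 + x ^ 2) - x * (2 + x ^ 2) * mi x

lemma rr_deriv (x : ℝ) : HasDerivAt (fun x => 1 - x * mi x) (-mi x + x * (1 - x * mi x)) x := by
  have := ((hasDerivAt_id x).mul (mi_deriv x)).const_sub 1
  refine this.congr_deriv ?_
  simp; ring

lemma GG_deriv (x : ℝ) : HasDerivAt GG (yy x) x := by
  have := ((ph_deriv x).mul ((rr_deriv x).pow 2)).add ((hasDerivAt_id x).mul (rr_deriv x))
  refine this.congr_deriv ?_
  simp [yy]; ring

def y1 (x : ℝ) : ℝ := (1 * ph x + x * (-x * ph x)) * (1 - x * mi x) ^ 2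
  + x * ph x * (2 * (1 - x * mi x) * (-mi x + x * (1 - x * mi x)))
  - ((2 * (-x * ph x) * (1 - x * mi x) + 2 * ph x * (-mi x + x * (1 - x * mi x))) * mi x
    + 2 * ph x * (1 - x * mi x) * (x * mi x - 1))
  + 2 * x - ((2 + 3 * x ^ 2) * mi x + x * (2 + x ^ 2) * (x * mi x - 1))

lemma yy_deriv (x : ℝ) : HasDerivAt yy (y1 x) x := by
  have i := hasDerivAt_id x
  have p := ph_deriv x
  have m := mi_deriv x
  have r := rr_deriv x
  have := ((((i.mul p).mul (r.pow 2)).sub (((p.const_mul 2).mul r).mul m)).add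
    ((i.pow 2).const_add 1)).sub ((i.mul ((i.pow 2).const_add 2)).mul m)
  refine this.congr_deriv ?_
  simp only [y1, Pi.mul_apply, Pi.pow_apply, id]; push_cast; ring

lemma y1_deriv (x : ℝ) : HasDerivAt y1 ((x ^ 2 + 6) * yy x + x * GG x) x := by
  have i := hasDerivAt_id x
  have p := ph_deriv x
  have m := mi_deriv x
  have r := rr_deriv x
  have r' := m.neg.add (i.mul r)
  have p' := i.neg.mul p
  have m' := (i.mul m).sub_const 1
  have := (((((p.const_mul 1).add (i.mul p')).mul (r.pow 2)).add
    ((i.mul p).mul ((r.const_mul 2).mul r'))).sub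
    (((((p'.const_mul 2).mul r).add ((p.const_mul 2).mul r')).mul m).add
    (((p.const_mul 2).mul r).mul m'))).add (i.const_mul 2)
  have := this.sub ((((i.pow 2).const_mul 3).const_add 2 |>.mul m).add
    ((i.mul ((i.pow 2).const_add 2)).mul m'))
  have e : y1 = (fun x => (1 * ph x + x * (-x * ph x)) * (1 - x * mi x) ^ 2
  + x * ph x * (2 * (1 - x * mi x) * (-mi x + x * (1 - x * mi x)))
  - ((2 * (-x * ph x) * (1 - x * mi x) + 2 * ph x * (-mi x + x * (1 - x * mi x))) * mi x
    + 2 * ph x * (1 - x * mi x) * (x * mi x - 1))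
  + 2 * x - ((2 + 3 * x ^ 2) * mi x + x * (2 + x ^ 2) * (x * mi x - 1))) := rfl
  rw [e]
  refine this.congr_deriv ?_
  simp [yy, GG]; ring

lemma rr_nonneg (x : ℝ) : 0 ≤ 1 - x * mi x := by
  have := mills_upper x
  have hp := ph_pos x
  have : 1 - x * mi x = (ph x - x * Ps x) / ph x := by unfold mi; field_simp
  rw [this]; positivity

lemma mi_nonneg (x : ℝ) : 0 ≤ mi x := div_nonneg (Ps_nonneg x) (ph_pos x).le

lemma mi_lower (x : ℝ) : x ≤ (1 + x ^ 2) * mi x := by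
  have := mills_lower x
  unfold mi
  rw [mul_div_assoc', le_div_iff₀ (ph_pos x)]
  linarith

lemma GG_pos {x : ℝ} (hx : 0 < x) : 0 ≤ GG x := by
  have := rr_nonneg x
  have := ph_pos x
  unfold GG; positivity

lemma yy_zero : yy 0 = 0 := by
  have := (ph_pos 0).ne'
  simp [yy, mi, Ps_zero]
  field_simp; norm_num

lemma yy_le {x : ℝ} (hx : 0 < x) : yy x ≤ 3 / x := by
  have h1 := rr_nonneg x
  have h2 := mi_nonneg x
  have h3 := ph_pos x
  have h4 := mi_lower x
  have h5 := xph_le hx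
  have h6 : (1 - x * mi x) ^ 2 ≤ 1 := by
    have : 0 ≤ x * mi x := by positivity
    nlinarith
  have h7 : x * ph x * (1 - x * mi x) ^ 2 ≤ x * ph x := by
    have : 0 < x * ph x := by positivity
    nlinarith
  have h8 : 0 ≤ 2 * ph x * (1 - x * mi x) * mi x := by positivity
  have h9 : (1 + x ^ 2) - x * (2 + x ^ 2) * mi x ≤ 1 / x := by
    have : x / (1 + x ^ 2) ≤ mi x := by
      rw [div_le_iff₀ (by positivity)]; linarith
    have h10 : x * (2 + x ^ 2) * (x / (1 + x ^ 2)) ≤ x * (2 + x ^ 2) * mi x := by gcongr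
    have h11 : (1 + x ^ 2) - x * (2 + x ^ 2) * (x / (1 + x ^ 2)) = 1 / (1 + x ^ 2) := by
      field_simp; ring
    have h12 : 1 / (1 + x ^ 2) ≤ 1 / x := by
      apply one_div_le_one_div_of_le hx; nlinarith [sq_nonneg (x - 1)]
    linarith
  have : 3 / x = 2 / x + 1 / x := by ring
  unfold yy
  linarith

lemma yy_nonpos {x : ℝ} (hx : 0 ≤ x) : yy x ≤ 0 := by
  by_contra! hpos
  have hx0 : 0 < x := by
    rcases hx.eq_or_lt with h | h
    · rw [← h, yy_zero] at hpos; exact absurd hpos (lt_irrefl _)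
    · exact h
  have hc : Continuous yy := continuous_iff_continuousAt.2 fun x => (yy_deriv x).continuousAt
  obtain ⟨X, hX1, hX2⟩ : ∃ X, x < X ∧ yy X < yy x := by
    refine ⟨max (x + 1) (4 / yy x), lt_of_lt_of_le (by linarith) (le_max_left _ _), ?_⟩
    have hm : 0 < max (x + 1) (4 / yy x) := lt_of_lt_of_le (by linarith) (le_max_left _ _)
    refine (yy_le hm).trans_lt ?_
    rw [div_lt_iff₀ hm]
    have : 4 / yy x ≤ max (x + 1) (4 / yy x) := le_max_right _ _
    rw [div_le_iff₀ hpos] at this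
    linarith
  obtain ⟨z, hz, hmax⟩ := isCompact_Icc.exists_isMaxOn (s := Set.Icc 0 X)
    ⟨0, by constructor <;> linarith⟩ hc.continuousOn
  have hzx : yy x ≤ yy z := hmax ⟨hx, hX1.le⟩
  have hz0 : 0 < z := by
    rcases hz.1.eq_or_lt with h | h
    · rw [← h, yy_zero] at hzx; linarith
    · exact h
  have hzX : z < X := by
    rcases hz.2.eq_or_lt with h | h
    · rw [h] at hzx; linarith
    · exact h
  have hloc : IsLocalMax yy z := hmax.isLocalMax (Icc_mem_nhds hz0 hzX)
  have hd : deriv yy = y1 := funext fun t => (yy_deriv t).deriv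
  have hpos2 : 0 < (z ^ 2 + 6) * yy z + z * GG z := by
    have := GG_pos hz0
    have : 0 < yy z := by linarith
    positivity
  have hlm : IsLocalMin yy z := by
    apply isLocalMin_of_deriv_deriv_pos
    · rw [hd, (y1_deriv z).deriv]; exact hpos2
    · exact hloc.deriv_eq_zero
    · exact hc.continuousAt
  have heq : yy =ᶠ[𝓝 z] fun _ => yy z := by
    filter_upwards [hloc, hlm] with t h1 h2 using le_antisymm h1 h2
  have h1 : deriv yy =ᶠ[𝓝 z] fun _ => 0 := by
    have := heq.deriv
    simpa using this
  have h2 := h1.deriv_eq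
  rw [hd, (y1_deriv z).deriv] at h2
  simp at h2
  linarith

lemma GG_le {x : ℝ} (hx : 0 ≤ x) : GG x ≤ ph 0 := by
  have ha : AntitoneOn GG (Set.Ici 0) := by
    apply antitoneOn_of_deriv_nonpos (convex_Ici 0)
    · exact fun t _ => (GG_deriv t).continuousAt.continuousWithinAt
    · exact fun t _ => (GG_deriv t).differentiableAt.differentiableWithinAt
    · intro t ht
      rw [(GG_deriv t).deriv]
      rw [interior_Ici] at ht
      exact yy_nonpos (le_of_lt ht)
  have := ha (Set.mem_Ici.2 le_rfl) (Set.mem_Ici.2 hx) hx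
  simpa [GG] using this

/-- integrated Gaussian tail -/
def AA (x : ℝ) : ℝ := ph x - x * Ps x

lemma AA_nonneg (x : ℝ) : 0 ≤ AA x := mills_upper x

lemma AA_deriv (x : ℝ) : HasDerivAt AA (-Ps x) x := by
  have := (ph_deriv x).sub ((hasDerivAt_id x).mul (Ps_deriv x))
  refine this.congr_deriv ?_
  simp

lemma AA_tend : Tendsto AA atTop (𝓝 0) := by
  refine squeeze_zero' (by filter_upwards with x using AA_nonneg x) ?_ ph_tend
  filter_upwards [eventually_gt_atTop 0] with x hx
  have := mul_nonneg hx.le (Ps_nonneg x)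
  unfold AA; linarith

lemma AA_neg (x : ℝ) : AA (-x) = ph x + x * (1 - Ps x) := by
  simp only [AA, ph_neg, Ps_neg]; ring

lemma AAB_le (x : ℝ) : AA x * AA (-x) ≤ ph 0 * ph x := by
  wlog hx : 0 ≤ x generalizing x with H
  · have := H (-x) (by linarith)
    rw [neg_neg, ph_neg] at this
    linarith
  have h := GG_le hx
  have hp := ph_pos x
  have e : AA x * AA (-x) = GG x * ph x := by
    rw [AA_neg]; unfold AA GG mi
    field_simp
    ring
  rw [e]
  gcongr

lemma Ps_intOn (x : ℝ) : IntegrableOn Ps (Set.Ioi x) := by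
  have := integrableOn_Ioi_deriv_of_nonpos' (a := x) (fun t _ => AA_deriv t)
    (fun t _ => neg_nonpos.2 (Ps_nonneg t)) AA_tend
  simpa using this.neg

lemma Ps_tl (x : ℝ) : tl Ps x = AA x := by
  have := integral_Ioi_of_hasDerivAt_of_nonpos' (a := x) (fun t _ => AA_deriv t)
    (fun t _ => neg_nonpos.2 (Ps_nonneg t)) AA_tend
  rw [integral_neg] at this
  unfold tl; linarith

lemma gPs_intOn {g : ℝ → ℝ} (hg : Continuous g) (hb : ∀ x, |g x| ≤ 1) (x : ℝ) :
    IntegrableOn (fun t => g t * Ps t) (Set.Ioi x) := by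
  refine (Ps_intOn x).mono' (hg.mul Ps_cont).aestronglyMeasurable ?_
  filter_upwards with t
  rw [Real.norm_eq_abs, abs_mul, abs_of_nonneg (Ps_nonneg t)]
  nlinarith [hb t, Ps_nonneg t]

def be (g : ℝ → ℝ) (x : ℝ) : ℝ := tl (fun t => g t * Ps t) x

lemma be_deriv {g : ℝ → ℝ} (hg : Continuous g) (hb : ∀ x, |g x| ≤ 1) (x : ℝ) :
    HasDerivAt (be g) (-(g x * Ps x)) x :=
  tl_deriv (hg.mul Ps_cont) (gPs_intOn hg hb) x

lemma be_le {g : ℝ → ℝ} (hb : ∀ x, |g x| ≤ 1) (x : ℝ) :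
    |be g x| ≤ AA x := by
  rw [← Ps_tl]
  unfold be tl
  rw [← Real.norm_eq_abs]
  apply norm_integral_le_of_norm_le (Ps_intOn x)
  filter_upwards with t
  rw [Real.norm_eq_abs, abs_mul, abs_of_nonneg (Ps_nonneg t)]
  nlinarith [hb t, Ps_nonneg t]

/-- Existence of the Stein solution for C¹ test functions. -/
lemma stein_exists {f g : ℝ → ℝ} (hf : ∀ x, HasDerivAt f (g x) x) (hg : Continuous g)
    (hb : ∀ x, |g x| ≤ 1) :
    ∃ (h h' h'' : ℝ → ℝ) (c : ℝ), (∀ x, HasDerivAt h (h' x) x) ∧ (∀ x, HasDerivAt h' (h'' x) x) ∧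
      (∀ x, |h' x| ≤ Real.sqrt (2 / Real.pi)) ∧ (∀ x, |h'' x| ≤ 2) ∧
      (∀ x, h' x - x * h x = f x - c) := by
  set gn : ℝ → ℝ := fun x => g (-x) with hgn
  have hgc : Continuous gn := hg.comp continuous_neg
  have hgb : ∀ x, |gn x| ≤ 1 := fun x => hb _
  set al : ℝ → ℝ := fun x => be gn (-x) with hal
  have dal : ∀ x, HasDerivAt al (g x * (1 - Ps x)) x := by
    intro x
    have := (be_deriv hgc hgb (-x)).comp x (hasDerivAt_neg x)
    refine this.congr_deriv ?_
    simp [hgn, Ps_neg]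
  have dbe := be_deriv hg hb
  have hab : ∀ x, |al x| ≤ AA (-x) := fun x => be_le hgb (-x)
  have hbb : ∀ x, |be g x| ≤ AA x := fun x => be_le hb x
  obtain ⟨c, hc⟩ : ∃ c, ∀ x, al x - be g x = f x - c := by
    refine ⟨f 0 - (al 0 - be g 0), fun x => ?_⟩
    have hd : ∀ x, HasDerivAt (fun x => al x - be g x - f x) 0 x := by
      intro x
      refine (((dal x).sub (dbe x)).sub (hf x)).congr_deriv ?_
      ring
    have := is_const_of_deriv_eq_zero (fun x => (hd x).differentiableAt)
      (fun x => (hd x).deriv) x 0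
    linarith
  set h : ℝ → ℝ := fun x => -(Ps x * al x + (1 - Ps x) * be g x) / ph x with hh
  have dh : ∀ x, HasDerivAt h (x * h x + (al x - be g x)) x := by
    intro x
    have := (((Ps_deriv x).mul (dal x)).add (((Ps_deriv x).const_sub 1).mul (dbe x))).neg.div
      (ph_deriv x) (ph_pos x).ne'
    refine this.congr_deriv ?_
    have := (ph_pos x).ne'
    simp [hh]
    field_simp
    ring
  have dh' : ∀ x, HasDerivAt (fun x => x * h x + (al x - be g x))
      (h x + x * (x * h x + (al x - be g x)) + g x) x := by
    intro x
    refine (((hasDerivAt_id x).mul (dh x)).add ((dal x).sub (dbe x))).congr_deriv ?_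
    simp; ring
  refine ⟨h, fun x => x * h x + (al x - be g x),
    fun x => h x + x * (x * h x + (al x - be g x)) + g x, c, dh, dh', ?_, ?_, ?_⟩
  · intro x
    have hp := ph_pos x
    have e : x * h x + (al x - be g x) = (al x * AA x - be g x * AA (-x)) / ph x := by
      rw [AA_neg]; simp only [hh, AA]; field_simp; ring
    have hs : Real.sqrt (2 / Real.pi) = 2 * ph 0 := by
      have : 2 * ph 0 = 2 / Real.sqrt (2 * Real.pi) := by simp [ph]; ring
      rw [this, Real.sqrt_div' _ Real.pi_pos.le, Real.sqrt_mul' _ Real.pi_pos.le]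
      have h2 : Real.sqrt 2 * Real.sqrt 2 = 2 := Real.mul_self_sqrt (by norm_num)
      have : 0 < Real.sqrt Real.pi := Real.sqrt_pos.2 Real.pi_pos
      field_simp
      linarith
    have h1 : |al x * AA x - be g x * AA (-x)| ≤ 2 * (AA x * AA (-x)) := by
      refine (abs_sub _ _).trans ?_
      rw [abs_mul, abs_mul, abs_of_nonneg (AA_nonneg x), abs_of_nonneg (AA_nonneg (-x))]
      nlinarith [hab x, hbb x, AA_nonneg x, AA_nonneg (-x)]
    beta_reduce
    rw [e, abs_div, abs_of_pos hp, div_le_iff₀ hp, hs]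
    linarith [AAB_le x]
  · intro x
    have hp := ph_pos x
    have e : h x + x * (x * h x + (al x - be g x)) + g x =
       g x - al x * (((1 + x ^ 2) * Ps x - x * ph x) / ph x)
        - be g x * (((1 + x ^ 2) * Ps (-x) + x * ph x) / ph x) := by
      rw [Ps_neg]; simp only [hh]; field_simp; ring
    have m1 : 0 ≤ ((1 + x ^ 2) * Ps x - x * ph x) / ph x := div_nonneg (mills_lower x) hp.le
    have m2 : 0 ≤ ((1 + x ^ 2) * Ps (-x) + x * ph x) / ph x := by
      have := mills_lower (-x)
      rw [ph_neg] at this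
      refine div_nonneg ?_ hp.le
      nlinarith
    have e2 : AA (-x) * (((1 + x ^ 2) * Ps x - x * ph x) / ph x)
        + AA x * (((1 + x ^ 2) * Ps (-x) + x * ph x) / ph x) = 1 := by
      rw [AA_neg, Ps_neg]; simp only [AA]; field_simp; ring
    beta_reduce
    rw [e]
    refine (abs_sub _ _).trans ?_
    refine (add_le_add_left (abs_sub _ _) _).trans ?_
    rw [abs_mul, abs_mul, abs_of_nonneg m1, abs_of_nonneg m2]
    have := mul_le_mul_of_nonneg_right (hab x) m1
    have := mul_le_mul_of_nonneg_right (hbb x) m2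
    linarith [hb x]
  · intro x
    rw [← hc]; ring

lemma growth {h h' : ℝ → ℝ} (hd : ∀ x, HasDerivAt h (h' x) x) (hb : ∀ x, |h' x| ≤ 1) (x : ℝ) :
    |h x| ≤ |h 0| + |x| := by
  have := Convex.norm_image_sub_le_of_norm_hasDerivWithin_le (s := Set.univ) (f := h) (f' := h')
    (C := 1) (x := 0) (y := x) (fun x _ => (hd x).hasDerivWithinAt) (fun x _ => hb x) convex_univ
    trivial trivial
  simp only [Real.norm_eq_abs, sub_zero, one_mul] at this
  have h2 := abs_sub_abs_le_abs_sub (h x) (h 0)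
  linarith

lemma taylor {h h' h'' : ℝ → ℝ} (hd : ∀ x, HasDerivAt h (h' x) x)
    (hd' : ∀ x, HasDerivAt h' (h'' x) x) (hb : ∀ x, |h'' x| ≤ 2) (w v : ℝ) :
    |h w - h v - (w - v) * h' w| ≤ (w - v) ^ 2 := by
  have key : ∀ (h h' h'' : ℝ → ℝ) (_ : ∀ x, HasDerivAt h (h' x) x)
    (_ : ∀ x, HasDerivAt h' (h'' x) x) (_ : ∀ x, |h'' x| ≤ 2),
     h w - h v - (w - v) * h' w ≤ (w - v) ^ 2 := by
    intro h h' h'' hd hd' hb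
    have hmono : Monotone (fun x => 2 * x + h' x) := by
      have hd2 : ∀ x, HasDerivAt (fun x => 2 * x + h' x) (2 + h'' x) x := fun x => by
        refine (((hasDerivAt_id x).const_mul 2).add (hd' x)).congr_deriv ?_
        simp
      apply monotone_of_deriv_nonneg (fun x => (hd2 x).differentiableAt)
      intro x
      rw [(hd2 x).deriv]
      linarith [(abs_le.1 (hb x)).1]
    have hp : ∀ x, HasDerivAt (fun x => (x - w) ^ 2 + h x - x * h' w)
        (2 * (x - w) + h' x - h' w) x := fun x => by
      have := ((((hasDerivAt_id x).sub_const w).pow 2).add (hd x)).sub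
        ((hasDerivAt_id x).mul_const (h' w))
      refine this.congr_deriv ?_
      simp
    rcases le_total w v with hle | hle
    · have hm : MonotoneOn (fun x => (x - w) ^ 2 + h x - x * h' w) (Set.Ici w) := by
        apply monotoneOn_of_deriv_nonneg (convex_Ici w)
        · exact fun t _ => (hp t).continuousAt.continuousWithinAt
        · exact fun t _ => (hp t).differentiableAt.differentiableWithinAt
        · intro t ht
          rw [interior_Ici] at ht
          rw [(hp t).deriv]
          have := hmono (le_of_lt ht)
          simp only at this
          linarith
      have := hm (Set.mem_Ici.2 le_rfl) (Set.mem_Ici.2 hle) hle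
      simp only at this
      nlinarith
    · have hm : AntitoneOn (fun x => (x - w) ^ 2 + h x - x * h' w) (Set.Iic w) := by
        apply antitoneOn_of_deriv_nonpos (convex_Iic w)
        · exact fun t _ => (hp t).continuousAt.continuousWithinAt
        · exact fun t _ => (hp t).differentiableAt.differentiableWithinAt
        · intro t ht
          rw [interior_Iic] at ht
          rw [(hp t).deriv]
          have := hmono (le_of_lt ht)
          simp only at this
          linarith
      have := hm (Set.mem_Iic.2 hle) (Set.mem_Iic.2 le_rfl) hle
      simp only at this
      nlinarith
  rw [abs_le]
  constructor
  · have := key (fun x => -h x) (fun x => -h' x) (fun x => -h'' x) (fun x => (hd x).neg)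
      (fun x => (hd' x).neg) (fun x => by simpa using hb x)
    linarith
  · exact key h h' h'' hd hd' hb

lemma sqrt_le_one : Real.sqrt (2 / Real.pi) ≤ 1 := by
  rw [Real.sqrt_le_one]
  rw [div_le_one Real.pi_pos]
  linarith [Real.pi_gt_three]

lemma gauss_int_of_growth {h : ℝ → ℝ} (hc : Continuous h) (K : ℝ) (hb : ∀ x, |h x| ≤ K + |x|) :
    Integrable h (gaussianReal 0 1) := by
  have h1 : Integrable (fun x : ℝ => x) (gaussianReal 0 1) := by
    have := (memLp_id_gaussianReal (μ := 0) (v := 1) 1)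
    exact memLp_one_iff_integrable.1 this
  refine ((integrable_const K).add h1.abs).mono' hc.aestronglyMeasurable ?_
  filter_upwards with x using by simpa using hb x

lemma gauss_int_iff {h : ℝ → ℝ} (hi : Integrable h (gaussianReal 0 1)) :
    Integrable (fun x => h x * ph x) := by
  rw [gaussianReal_of_var_ne_zero _ one_ne_zero] at hi
  have := (integrable_withDensity_iff_integrable_smul' (measurable_gaussianPDF 0 1)
    (by filter_upwards with x using by simp [gaussianPDF])).1 hi
  refine this.congr ?_
  filter_upwards with x
  rw [toReal_gaussianPDF, ph_eq]
  simp [mul_comm]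

lemma stein_const {f h h' : ℝ → ℝ} {c : ℝ} (hf : Continuous f) (hfb : ∀ x, |f x| ≤ |f 0| + |x|)
    (hd : ∀ x, HasDerivAt h (h' x) x) (hb : ∀ x, |h' x| ≤ 1)
    (he : ∀ x, h' x - x * h x = f x - c) : c = ∫ x, f x ∂(gaussianReal 0 1) := by
  have hc : Continuous h := continuous_iff_continuousAt.2 fun x => (hd x).continuousAt
  have i1 := gauss_int_of_growth hf _ hfb
  have i2 := gauss_int_of_growth hc _ (growth hd hb)
  have j1 := gauss_int_iff (i1.sub (integrable_const c))
  have j2 := gauss_int_iff i2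
  have dd : ∀ x, HasDerivAt (fun x => h x * ph x) ((f x - c) * ph x) x := fun x => by
    refine ((hd x).mul (ph_deriv x)).congr_deriv ?_
    rw [← he]; ring
  have h0 := integral_eq_zero_of_hasDerivAt_of_integrable dd j1 j2
  have h1 : ∫ x, (f x - c) ∂(gaussianReal 0 1) = 0 := by
    rw [integral_gaussianReal_eq_integral_smul one_ne_zero]
    refine Eq.trans ?_ h0
    congr 1; ext x; rw [ph_eq, smul_eq_mul, mul_comm]
  rw [integral_sub i1 (integrable_const c)] at h1
  simp at h1
  linarith

lemma abs_int_le_sqrt {Ω : Type} [MeasurableSpace Ω] (μ : Measure Ω) [IsProbabilityMeasure μ]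
    {X : Ω → ℝ} (hX : MemLp X 2 μ) : ∫ ω, |X ω| ∂μ ≤ Real.sqrt (∫ ω, X ω ^ 2 ∂μ) := by
  apply Real.le_sqrt_of_sq_le
  have h1 := variance_nonneg |X| μ
  rw [variance_eq_sub hX.abs] at h1
  simp only [Pi.pow_apply, Pi.abs_apply, sq_abs] at h1
  linarith

section core
set_option linter.unusedSectionVars false
variable {Ω : Type} [MeasurableSpace Ω] {μ : Measure Ω} [IsProbabilityMeasure μ]
    {n : ℕ} {U : Fin n → Ω → ℝ} {D : Fin n → Finset (Fin n)}

/-- dominating variable -/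
def VV (U : Fin n → Ω → ℝ) (ω : Ω) : ℝ := ∑ i, |U i ω|

lemma VV_nonneg (ω : Ω) : 0 ≤ VV U ω := Finset.sum_nonneg fun _ _ => abs_nonneg _

lemma VV_memLp (hmeas : ∀ i, Measurable (U i))
    (hmom4 : ∀ i, Integrable (fun ω => (U i ω) ^ 4) μ) : MemLp (VV U) 4 μ := by
  unfold VV
  apply memLp_finsetSum
  intro i _
  apply MemLp.abs
  have := (integrable_norm_rpow_iff (p := 4) (μ := μ) (hmeas i).aestronglyMeasurable
    (by norm_num) (by norm_num)).1 ?_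
  · exact this
  · refine (hmom4 i).congr ?_
    filter_upwards with ω
    have e4 : (4 : ENNReal).toReal = ((4 : ℕ) : ℝ) := by norm_num
    rw [e4, Real.rpow_natCast, Real.norm_eq_abs, ← abs_pow, abs_of_nonneg (by positivity)]

lemma pow_int {X : Ω → ℝ} (hX : ∀ ω, 0 ≤ X ω) (p : ℕ) (hp : p ≠ 0) (h1 : MemLp X (p : ENNReal) μ) :
    Integrable (fun ω => X ω ^ p) μ := by
  have h2 := h1.integrable_norm_pow hp
  have e : (fun ω => ‖X ω‖ ^ p) = fun ω => X ω ^ p := by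
    funext ω
    rw [Real.norm_of_nonneg (hX ω)]
  rwa [e] at h2

lemma VV_int (hV : MemLp (VV U) 4 μ) : Integrable (fun ω => (1 + VV U ω) ^ 4) μ := by
  have h0 : MemLp (fun _ : Ω => (1 : ℝ)) 4 μ := memLp_const 1
  have h1 : MemLp (fun ω => 1 + VV U ω) 4 μ := h0.add hV
  have e4 : (4 : ENNReal) = ((4 : ℕ) : ENNReal) := by norm_num
  rw [e4] at h1
  exact pow_int (fun ω => by have := VV_nonneg (U := U) ω; linarith) 4 (by norm_num) h1

lemma dom_int (hV : MemLp (VV U) 4 μ) {X : Ω → ℝ} (hX : Measurable X) (K : ℝ)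
    (hb : ∀ ω, |X ω| ≤ K * (1 + VV U ω) ^ 4) : Integrable X μ := by
  refine ((VV_int hV).const_mul K).mono' hX.aestronglyMeasurable ?_
  filter_upwards with ω using hb ω

lemma U_le (i : Fin n) (ω : Ω) : |U i ω| ≤ VV U ω :=
  Finset.single_le_sum (f := fun i => |U i ω|) (fun _ _ => abs_nonneg _) (Finset.mem_univ i)

lemma sum_le (s : Finset (Fin n)) (ω : Ω) : |∑ j ∈ s, U j ω| ≤ VV U ω :=
  (Finset.abs_sum_le_sum_abs _ _).trans
    (Finset.sum_le_sum_of_subset_of_nonneg (Finset.subset_univ s) fun _ _ _ => abs_nonneg _)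

lemma T_le (ω : Ω) : |∑ i, ∑ j ∈ D i, U i ω * U j ω| ≤ VV U ω ^ 2 := by
  refine (Finset.abs_sum_le_sum_abs _ _).trans ?_
  rw [sq]
  conv_rhs => rw [VV, Finset.sum_mul]
  apply Finset.sum_le_sum
  intro i _
  rw [← Finset.mul_sum, abs_mul]
  gcongr
  exact sum_le _ _

lemma one_le_pw {v : ℝ} (hv : 0 ≤ v) : 1 ≤ (1 + v) ^ 4 ∧ v ≤ (1 + v) ^ 4 ∧ v ^ 2 ≤ (1 + v) ^ 4 ∧
    v ^ 3 ≤ (1 + v) ^ 4 ∧ v ^ 4 ≤ (1 + v) ^ 4 := by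
  have h2 : 0 ≤ v ^ 2 := by positivity
  have h3 : 0 ≤ v ^ 3 := by positivity
  have h4 : 0 ≤ v ^ 4 := by positivity
  have : (1 + v) ^ 4 = 1 + 4 * v + 6 * v ^ 2 + 4 * v ^ 3 + v ^ 4 := by ring
  rw [this]
  refine ⟨?_, ?_, ?_, ?_, ?_⟩ <;> linarith

lemma indep_zero (hmeas : ∀ i, Measurable (U i)) (hdep : DependencyNeighborhoods μ U D)
    (hmean : ∀ i, ∫ ω, U i ω ∂μ = 0) {F : ℝ → ℝ} (hF : Measurable F) (i : Fin n) :
    ∫ ω, U i ω * F (∑ j ∈ (D i)ᶜ, U j ω) ∂μ = 0 := by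
  have h1 : ∀ ω, ∑ j ∈ (D i)ᶜ, U j ω = ∑ j : {j : Fin n // j ∉ D i}, U j.1 ω := fun ω =>
    Finset.sum_subtype (p := fun j => j ∉ D i) _ (fun x => by simp) _
  have h2 : Measurable (fun v : {j : Fin n // j ∉ D i} → ℝ => F (∑ j, v j)) := by fun_prop
  have h3 := (hdep.2 i).comp measurable_id h2
  have h4 := IndepFun.integral_fun_mul_eq_mul_integral h3
    (by simpa using (hmeas i).aestronglyMeasurable)
    (h2.comp (measurable_pi_lambda _ fun j => hmeas j.1)).aestronglyMeasurable
  simp only [Function.comp, id, hmean, zero_mul] at h4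
  simp only [h1]
  exact h4

lemma core (hmeas : ∀ i, Measurable (U i)) (hdep : DependencyNeighborhoods μ U D)
    (hmean : ∀ i, ∫ ω, U i ω ∂μ = 0)
    (hmom4 : ∀ i, Integrable (fun ω => (U i ω) ^ 4) μ)
    (hvar : variance (fun ω => ∑ i, U i ω) μ = 1)
    {h h' h'' : ℝ → ℝ} (hd : ∀ x, HasDerivAt h (h' x) x)
    (hd' : ∀ x, HasDerivAt h' (h'' x) x)
    (hb : ∀ x, |h' x| ≤ Real.sqrt (2 / Real.pi)) (hb' : ∀ x, |h'' x| ≤ 2) :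
    |∫ ω, (h' (∑ i, U i ω) - (∑ i, U i ω) * h (∑ i, U i ω)) ∂μ| ≤
        (∑ i, ∑ j ∈ D i, ∑ k ∈ D i, ∫ ω, |U i ω * U j ω * U k ω| ∂μ) +
          Real.sqrt (2 / Real.pi) *
            Real.sqrt (variance (fun ω => ∑ i, ∑ j ∈ D i, U i ω * U j ω) μ) := by
  have hV := VV_memLp hmeas hmom4
  have hb1 : ∀ x, |h' x| ≤ 1 := fun x => (hb x).trans sqrt_le_one
  have hg := growth hd hb1
  have hcm : Measurable h :=
    (continuous_iff_continuousAt.2 fun x => (hd x).continuousAt).measurable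
  have hcm' : Measurable h' :=
    (continuous_iff_continuousAt.2 fun x => (hd' x).continuousAt).measurable
  set W : Ω → ℝ := fun ω => ∑ i, U i ω with hW
  set T : Ω → ℝ := fun ω => ∑ i, ∑ j ∈ D i, U i ω * U j ω with hT
  set S : Fin n → Ω → ℝ := fun i ω => ∑ j ∈ D i, U j ω with hS
  set N : Fin n → Ω → ℝ := fun i ω => ∑ j ∈ (D i)ᶜ, U j ω with hN
  have mW : Measurable W := Finset.measurable_sum _ fun i _ => hmeas i
  have mS : ∀ i, Measurable (S i) := fun i => Finset.measurable_sum _ fun i _ => hmeas i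
  have mN : ∀ i, Measurable (N i) := fun i => Finset.measurable_sum _ fun i _ => hmeas i
  have mT : Measurable T := Finset.measurable_sum _ fun i _ =>
    Finset.measurable_sum _ fun j _ => (hmeas i).mul (hmeas j)
  have eW : ∀ i ω, W ω = S i ω + N i ω := fun i ω => (Finset.sum_add_sum_compl _ _).symm
  have eT : ∀ ω, T ω = ∑ i, U i ω * S i ω := fun ω => by simp only [hT, hS, Finset.mul_sum]
  have bW : ∀ ω, |W ω| ≤ VV U ω := fun ω => sum_le _ _
  have bS : ∀ i ω, |S i ω| ≤ VV U ω := fun i ω => sum_le _ _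
  have bN : ∀ i ω, |N i ω| ≤ VV U ω := fun i ω => sum_le _ _
  have bT : ∀ ω, |T ω| ≤ VV U ω ^ 2 := fun ω => T_le _
  have iT : Integrable T μ := dom_int hV mT 1 fun ω => by
    have := one_le_pw (VV_nonneg (U := U) ω)
    linarith [bT ω]
  have iT2 : MemLp T 2 μ := by
    rw [memLp_two_iff_integrable_sq mT.aestronglyMeasurable]
    refine dom_int hV (mT.pow_const 2) 1 fun ω => ?_
    have := one_le_pw (VV_nonneg (U := U) ω)
    have h2 : |T ω ^ 2| ≤ (VV U ω ^ 2) ^ 2 := by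
      rw [abs_pow]; gcongr; exact bT ω
    nlinarith
  have iU : ∀ i, Integrable (U i) μ := fun i => dom_int hV (hmeas i) 1 fun ω => by
    have := one_le_pw (VV_nonneg (U := U) ω)
    linarith [U_le (U := U) i ω]
  have iW2 : MemLp W 2 μ := by
    rw [memLp_two_iff_integrable_sq mW.aestronglyMeasurable]
    refine dom_int hV (mW.pow_const 2) 1 fun ω => ?_
    have := one_le_pw (VV_nonneg (U := U) ω)
    have h2 : |W ω ^ 2| ≤ (VV U ω) ^ 2 := by
      rw [abs_pow]; gcongr; exact bW ω
    nlinarith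
  have iUN : ∀ i, Integrable (fun ω => U i ω * N i ω) μ := fun i =>
    dom_int hV ((hmeas i).mul (mN i)) 1 fun ω => by
      have := one_le_pw (VV_nonneg (U := U) ω)
      have h2 : |U i ω * N i ω| ≤ VV U ω * VV U ω := by
        rw [abs_mul]
        exact mul_le_mul (U_le i ω) (bN i ω) (abs_nonneg _) (VV_nonneg ω)
      nlinarith
  have iUhN : ∀ i, Integrable (fun ω => U i ω * h (N i ω)) μ := fun i =>
    dom_int hV ((hmeas i).mul (hcm.comp (mN i))) (|h 0| + 1) fun ω => by
      have := one_le_pw (VV_nonneg (U := U) ω)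
      have h2 : |U i ω * h (N i ω)| ≤ VV U ω * (|h 0| + VV U ω) := by
        rw [abs_mul]
        exact mul_le_mul (U_le i ω) ((hg _).trans (by linarith [bN i ω])) (abs_nonneg _)
          (VV_nonneg ω)
      have := mul_le_mul_of_nonneg_left this.2.1 (abs_nonneg (h 0))
      nlinarith
  set R : Fin n → Ω → ℝ := fun i ω => h (W ω) - h (N i ω) - S i ω * h' (W ω) with hR
  have bR : ∀ i ω, |U i ω * R i ω| ≤ ∑ j ∈ D i, ∑ k ∈ D i, |U i ω * U j ω * U k ω| := by
    intro i ω
    have h1 : |R i ω| ≤ S i ω ^ 2 := by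
      have := taylor hd hd' hb' (W ω) (N i ω)
      have e : W ω - N i ω = S i ω := by rw [eW i ω]; ring
      rw [e] at this
      exact this
    have h2 : S i ω ^ 2 ≤ (∑ j ∈ D i, |U j ω|) ^ 2 := by
      rw [← sq_abs (S i ω)]
      gcongr
      exact Finset.abs_sum_le_sum_abs _ _
    rw [abs_mul]
    calc |U i ω| * |R i ω| ≤ |U i ω| * (∑ j ∈ D i, |U j ω|) ^ 2 := by
          gcongr; exact h1.trans h2
      _ = _ := by
        rw [sq, Finset.sum_mul_sum, Finset.mul_sum]
        refine Finset.sum_congr rfl fun j _ => ?_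
        rw [Finset.mul_sum]
        refine Finset.sum_congr rfl fun k _ => ?_
        rw [abs_mul, abs_mul, mul_assoc]
  have i3 : ∀ i j k, Integrable (fun ω => |U i ω * U j ω * U k ω|) μ := fun i j k =>
    dom_int hV (((hmeas i).mul (hmeas j)).mul (hmeas k)).abs 1 fun ω => by
      have := one_le_pw (VV_nonneg (U := U) ω)
      have h2 : |U i ω| * |U j ω| * |U k ω| ≤ VV U ω * VV U ω * VV U ω := by
        have := VV_nonneg (U := U) ω
        gcongr <;> exact U_le _ _
      rw [abs_abs, abs_mul, abs_mul]
      nlinarith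
  have i3s : ∀ i, Integrable (fun ω => ∑ j ∈ D i, ∑ k ∈ D i, |U i ω * U j ω * U k ω|) μ :=
    fun i => integrable_finsetSum _ fun j _ => integrable_finsetSum _ fun k _ => i3 i j k
  have mR : ∀ i, Measurable (R i) := fun i =>
    ((hcm.comp mW).sub (hcm.comp (mN i))).sub ((mS i).mul (hcm'.comp mW))
  have iUR : ∀ i, Integrable (fun ω => U i ω * R i ω) μ := fun i => by
    refine (i3s i).mono' ((hmeas i).mul (mR i)).aestronglyMeasurable ?_
    filter_upwards with ω using bR i ω
  -- the expectation of T
  have hWmean : ∫ ω, W ω ∂μ = 0 := by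
    simp only [hW]
    rw [integral_finsetSum _ fun i _ => iU i]
    simp [hmean]
  have hW2 : ∫ ω, W ω ^ 2 ∂μ = 1 := by
    rw [variance_eq_sub iW2, hWmean] at hvar
    simpa using hvar
  have hTmean : ∫ ω, T ω ∂μ = 1 := by
    have e : ∀ ω, T ω = W ω ^ 2 - ∑ i, U i ω * N i ω := fun ω => by
      have : W ω ^ 2 = ∑ i, U i ω * W ω := by rw [← Finset.sum_mul, sq]
      rw [eT, this, ← Finset.sum_sub_distrib]
      refine Finset.sum_congr rfl fun i _ => ?_
      rw [eW i ω]; ring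
    simp only [e]
    rw [integral_sub iW2.integrable_sq (integrable_finsetSum _ fun i _ => iUN i), hW2,
      integral_finsetSum _ fun i _ => iUN i]
    have : ∀ i, ∫ ω, U i ω * N i ω ∂μ = 0 := fun i =>
      indep_zero hmeas hdep hmean measurable_id i
    simp [this]
  have i1T : MemLp (fun ω => T ω - 1) 2 μ := iT2.sub (memLp_const 1)
  have hTabs : ∫ ω, |T ω - 1| ∂μ ≤ Real.sqrt (variance T μ) := by
    rw [variance_eq_integral mT.aemeasurable, hTmean]
    exact abs_int_le_sqrt μ i1T
  have iTh : Integrable (fun ω => (1 - T ω) * h' (W ω)) μ := by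
    refine (i1T.integrable (by norm_num)).abs.mono'
      ((measurable_const.sub mT).mul (hcm'.comp mW)).aestronglyMeasurable ?_
    filter_upwards with ω
    rw [Real.norm_eq_abs, abs_mul, abs_sub_comm]
    have := hb1 (W ω)
    have := abs_nonneg (T ω - 1)
    nlinarith
  have hTh : |∫ ω, (1 - T ω) * h' (W ω) ∂μ| ≤
      Real.sqrt (2 / Real.pi) * Real.sqrt (variance T μ) := by
    refine le_trans ?_ (mul_le_mul_of_nonneg_left hTabs (Real.sqrt_nonneg _))
    rw [← integral_const_mul, ← Real.norm_eq_abs]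
    apply norm_integral_le_of_norm_le ((i1T.integrable (by norm_num)).abs.const_mul _)
    filter_upwards with ω
    rw [Real.norm_eq_abs, abs_mul, abs_sub_comm]
    have := hb (W ω)
    have := abs_nonneg (T ω - 1)
    nlinarith
  have hURb : ∀ i, |∫ ω, U i ω * R i ω ∂μ| ≤
      ∑ j ∈ D i, ∑ k ∈ D i, ∫ ω, |U i ω * U j ω * U k ω| ∂μ := by
    intro i
    have e : ∑ j ∈ D i, ∑ k ∈ D i, ∫ ω, |U i ω * U j ω * U k ω| ∂μ
        = ∫ ω, ∑ j ∈ D i, ∑ k ∈ D i, |U i ω * U j ω * U k ω| ∂μ := by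
      rw [integral_finsetSum _ fun j _ => integrable_finsetSum _ fun k _ => i3 i j k]
      refine Finset.sum_congr rfl fun j _ => ?_
      rw [integral_finsetSum _ fun k _ => i3 i j k]
    rw [e, ← Real.norm_eq_abs]
    apply norm_integral_le_of_norm_le (i3s i)
    filter_upwards with ω using bR i ω
  have hid : ∀ ω, h' (W ω) - W ω * h (W ω) = (1 - T ω) * h' (W ω) - ∑ i, U i ω * R i ω
      - ∑ i, U i ω * h (N i ω) := by
    intro ω
    have e1 : W ω * h (W ω) = ∑ i, U i ω * h (W ω) := by rw [← Finset.sum_mul]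
    have e2 : T ω * h' (W ω) = ∑ i, U i ω * S i ω * h' (W ω) := by rw [eT, Finset.sum_mul]
    have e3 : ∑ i, U i ω * h (W ω) = ∑ i, U i ω * R i ω + ∑ i, U i ω * h (N i ω)
        + ∑ i, U i ω * S i ω * h' (W ω) := by
      rw [← Finset.sum_add_distrib, ← Finset.sum_add_distrib]
      refine Finset.sum_congr rfl fun i _ => ?_
      simp only [hR]; ring
    rw [sub_mul, e2, e1, e3]; ring
  have hmain : ∫ ω, (h' (W ω) - W ω * h (W ω)) ∂μ =
      (∫ ω, (1 - T ω) * h' (W ω) ∂μ) - ∑ i, ∫ ω, U i ω * R i ω ∂μ := by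
    simp only [hid]
    have iA := integrable_finsetSum Finset.univ fun i _ => iUR i
    have iB := integrable_finsetSum Finset.univ fun i _ => iUhN i
    have iC : Integrable (fun ω => (1 - T ω) * h' (W ω) - ∑ i, U i ω * R i ω) μ := iTh.sub iA
    rw [integral_sub iC iB, integral_sub iTh iA,
      integral_finsetSum _ fun i _ => iUR i, integral_finsetSum _ fun i _ => iUhN i]
    have : ∀ i, ∫ ω, U i ω * h (N i ω) ∂μ = 0 := fun i =>
      indep_zero hmeas hdep hmean hcm i
    simp [this]
  have hfin := (abs_sub (∫ ω, (1 - T ω) * h' (W ω) ∂μ) (∑ i, ∫ ω, U i ω * R i ω ∂μ))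
  have hsum : |∑ i, ∫ ω, U i ω * R i ω ∂μ| ≤
      ∑ i, ∑ j ∈ D i, ∑ k ∈ D i, ∫ ω, |U i ω * U j ω * U k ω| ∂μ :=
    (Finset.abs_sum_le_sum_abs _ _).trans (Finset.sum_le_sum fun i _ => hURb i)
  rw [hmain]
  linarith

lemma lip_int (hV : MemLp (VV U) 4 μ) (hmeas : ∀ i, Measurable (U i)) {f : ℝ → ℝ}
    (hf : Continuous f) (hfb : ∀ x, |f x| ≤ |f 0| + |x|) :
    Integrable (fun ω => f (∑ i, U i ω)) μ := by
  refine dom_int hV (hf.measurable.comp (Finset.measurable_sum _ fun i _ => hmeas i))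
    (|f 0| + 1) fun ω => ?_
  have h1 := hfb (∑ i, U i ω)
  have h2 := sum_le (U := U) Finset.univ ω
  have h3 := one_le_pw (VV_nonneg (U := U) ω)
  have := mul_le_mul_of_nonneg_left h3.1 (abs_nonneg (f 0))
  linarith

lemma smooth_case (hmeas : ∀ i, Measurable (U i)) (hdep : DependencyNeighborhoods μ U D)
    (hmean : ∀ i, ∫ ω, U i ω ∂μ = 0)
    (hmom4 : ∀ i, Integrable (fun ω => (U i ω) ^ 4) μ)
    (hvar : variance (fun ω => ∑ i, U i ω) μ = 1)
    {f g : ℝ → ℝ} (hf : ∀ x, HasDerivAt f (g x) x) (hg : Continuous g)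
    (hb : ∀ x, |g x| ≤ 1) :
    |(∫ ω, f (∑ i, U i ω) ∂μ) - ∫ x, f x ∂(gaussianReal 0 1)| ≤
        (∑ i, ∑ j ∈ D i, ∑ k ∈ D i, ∫ ω, |U i ω * U j ω * U k ω| ∂μ) +
          Real.sqrt (2 / Real.pi) *
            Real.sqrt (variance (fun ω => ∑ i, ∑ j ∈ D i, U i ω * U j ω) μ) := by
  obtain ⟨h, h', h'', c, hd, hd', b1, b2, he⟩ := stein_exists hf hg hb
  have hfc : Continuous f := continuous_iff_continuousAt.2 fun x => (hf x).continuousAt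
  have hfb := growth hf hb
  have hc := stein_const hfc hfb hd (fun x => (b1 x).trans sqrt_le_one) he
  have := core hmeas hdep hmean hmom4 hvar hd hd' b1 b2
  simp only [he] at this
  rw [integral_sub (lip_int (VV_memLp hmeas hmom4) hmeas hfc hfb) (integrable_const c)] at this
  simpa [← hc] using this

end core

lemma smoothing {f : ℝ → ℝ} (hf : LipschitzWith 1 f) {e : ℝ} (he : 0 < e) :
    ∃ F g : ℝ → ℝ, (∀ x, HasDerivAt F (g x) x) ∧ Continuous g ∧ (∀ x, |g x| ≤ 1) ∧
      ∀ x, |F x - f x| ≤ e := by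
  have hl : ∀ x y, |f x - f y| ≤ |x - y| := fun x y => by
    have := hf.dist_le_mul x y
    simpa [Real.dist_eq] using this
  have hc := hf.continuous
  set P : ℝ → ℝ := fun x => ∫ t in (0 : ℝ)..x, f t with hP
  have dP : ∀ x, HasDerivAt P (f x) x := fun x =>
    intervalIntegral.integral_hasDerivAt_right (hc.intervalIntegrable _ _)
      (hc.stronglyMeasurableAtFilter _ _) hc.continuousAt
  refine ⟨fun x => (P (x + e) - P x) / e, fun x => (f (x + e) - f x) / e, ?_, ?_, ?_, ?_⟩
  · intro x
    have h1 : HasDerivAt (fun x => P (x + e)) (f (x + e)) x := (dP (x + e)).comp_add_const x e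
    exact (h1.sub (dP x)).div_const e
  · fun_prop
  · intro x
    rw [abs_div, abs_of_pos he, div_le_one he]
    have := hl (x + e) x
    simpa [abs_of_pos he] using this
  · intro x
    obtain ⟨z, hz, hz'⟩ := exists_hasDerivAt_eq_slope P f (show x < x + e by linarith)
      (continuous_iff_continuousAt.2 fun x => (dP x).continuousAt).continuousOn
      (fun t _ => dP t)
    have : (P (x + e) - P x) / e = f z := by rw [hz']; congr 1; ring
    simp only [this]
    refine (hl z x).trans ?_
    rw [abs_of_pos (by linarith [hz.1])]
    linarith [hz.2]

end SteinAux

end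

open SteinAux
theorem stmt_2 {Ω : Type} [MeasurableSpace Ω] (μ : Measure Ω) [IsProbabilityMeasure μ]
    {n : ℕ} (U : Fin n → Ω → ℝ) (D : Fin n → Finset (Fin n))
    (hmeas : ∀ i, Measurable (U i))
    (hdep : DependencyNeighborhoods μ U D)
    (hmean : ∀ i, ∫ ω, U i ω ∂μ = 0)
    (hmom4 : ∀ i, Integrable (fun ω => (U i ω) ^ 4) μ)
    (hvar : variance (fun ω => ∑ i, U i ω) μ = 1) :
    ∀ f : ℝ → ℝ, LipschitzWith 1 f →
      |(∫ ω, f (∑ i, U i ω) ∂μ) - ∫ x, f x ∂(gaussianReal 0 1)| ≤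
        (∑ i, ∑ j ∈ D i, ∑ k ∈ D i, ∫ ω, |U i ω * U j ω * U k ω| ∂μ) +
          Real.sqrt (2 / Real.pi) *
            Real.sqrt (variance (fun ω => ∑ i, ∑ j ∈ D i, U i ω * U j ω) μ) := by
  intro f hf
  have hc := hf.continuous
  have hfb : ∀ x, |f x| ≤ |f 0| + |x| := fun x => by
    have h1 := hf.dist_le_mul x 0
    simp only [Real.dist_eq, sub_zero, NNReal.coe_one, one_mul] at h1
    have h2 := abs_sub_abs_le_abs_sub (f x) (f 0)
    linarith
  have hV := VV_memLp hmeas hmom4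
  have if1 := lip_int hV hmeas hc hfb
  have if2 := gauss_int_of_growth hc _ hfb
  apply le_of_forall_pos_le_add
  intro e he
  obtain ⟨F, g, hF, hg, hb, hFf⟩ := smoothing hf (half_pos he)
  have hFc : Continuous F := continuous_iff_continuousAt.2 fun x => (hF x).continuousAt
  have hFb := growth hF hb
  have iF1 := lip_int hV hmeas hFc hFb
  have iF2 := gauss_int_of_growth hFc _ hFb
  have key := smooth_case hmeas hdep hmean hmom4 hvar hF hg hb
  have c1 : |(∫ ω, F (∑ i, U i ω) ∂μ) - ∫ ω, f (∑ i, U i ω) ∂μ| ≤ e / 2 := by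
    rw [← integral_sub iF1 if1, ← Real.norm_eq_abs]
    have := norm_integral_le_of_norm_le_const (μ := μ) (C := e / 2)
      (f := fun ω => F (∑ i, U i ω) - f (∑ i, U i ω))
      (by filter_upwards with ω using hFf _)
    simpa using this
  have c2 : |(∫ x, F x ∂(gaussianReal 0 1)) - ∫ x, f x ∂(gaussianReal 0 1)| ≤ e / 2 := by
    rw [← integral_sub iF2 if2, ← Real.norm_eq_abs]
    have := norm_integral_le_of_norm_le_const (μ := gaussianReal 0 1) (C := e / 2)
      (f := fun x => F x - f x)
      (by filter_upwards with x using hFf _)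
    simpa using this
  rw [abs_le] at key c1 c2 ⊢
  constructor <;> linarith [key.1, key.2, c1.1, c1.2, c2.1, c2.2]
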